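/- arXiv:2107.02981 — 2 statements merged into one kernel-verified Lean document; each statement's English description precedes it below -/
import Mathlib

section
/- Let d > 0 and let μ be the measure on ℝ² having density (r, φ) ↦ (r / (π d²)) · 1_{(0,d)×(−π,π)}(r, φ) with respect to the Lebesgue measure on ℝ², and let ν be the pushforward of μ under the map (r, φ) ↦ (r cos φ, r sin φ). For all real numbers i and j such that the closed square [i − 1/2, i + 1/2] × [j − 1/2, j + 1/2] is contained in the open ball {p ∈ ℝ² : ‖p‖ < d}, one has ν([i − 1/2, i + 1/2] × [j − 1/2, j + 1/2]) = 1/(π d²); in particular this probability is the same for every such grid cell (i, j). -/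
open Real MeasureTheory

/-- The measure with polar density `r / (π d²)` on `(0, d) × (-π, π)` gives the preimage under polar
coordinates of a set contained in the open disc of radius `d` its normalized area. -/
theorem withDensity_polarCoord_symm_preimage {d : ℝ} (hd : 0 < d) {s : Set (ℝ × ℝ)}
    (hs : MeasurableSet s) (hsd : ∀ q ∈ s, q.1 ^ 2 + q.2 ^ 2 < d ^ 2) :
    volume.withDensity (fun p : ℝ × ℝ =>
      ENNReal.ofReal ((Set.Ioo 0 d ×ˢ Set.Ioo (-π) π).indicator
        (fun q : ℝ × ℝ => q.1 / (π * d ^ 2)) p)) (polarCoord.symm ⁻¹' s) =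
      ENNReal.ofReal (1 / (π * d ^ 2)) * volume s := by
  have hpre : MeasurableSet (polarCoord.symm ⁻¹' s) :=
    continuous_polarCoord_symm.measurable hs
  rw [withDensity_apply _ hpre, ← lintegral_indicator hpre, ← lintegral_indicator_const hs,
    ← lintegral_comp_polarCoord_symm (s.indicator _),
    ← lintegral_indicator polarCoord.open_target.measurableSet]
  congr 1 with p
  by_cases hps : polarCoord.symm p ∈ s
  · have hr : p.1 ^ 2 < d ^ 2 := by
      have h := hsd _ hps
      simp only [polarCoord_symm_apply] at h
      nlinarith [sin_sq_add_cos_sq p.2]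
    have hrd : p.1 < d := lt_of_pow_lt_pow_left₀ 2 hd.le hr
    by_cases hpt : p ∈ polarCoord.target
    · have hmem : p ∈ Set.Ioo 0 d ×ˢ Set.Ioo (-π) π := ⟨⟨hpt.1, hrd⟩, hpt.2⟩
      rw [Set.indicator_of_mem (show p ∈ polarCoord.symm ⁻¹' s from hps),
        Set.indicator_of_mem hmem, Set.indicator_of_mem hpt, Set.indicator_of_mem hps,
        smul_eq_mul, ← ENNReal.ofReal_mul (le_of_lt hpt.1), mul_one_div]
    · have hmem : p ∉ Set.Ioo 0 d ×ˢ Set.Ioo (-π) π := fun h => hpt ⟨h.1.1, h.2⟩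
      rw [Set.indicator_of_mem (show p ∈ polarCoord.symm ⁻¹' s from hps),
        Set.indicator_of_notMem hmem, Set.indicator_of_notMem hpt, ENNReal.ofReal_zero]
  · rw [Set.indicator_of_notMem (show p ∉ polarCoord.symm ⁻¹' s from hps)]
    simp [Set.indicator, hps, -polarCoord_symm_apply]

theorem stmt_1 (d : ℝ) (hd : d > 0)
    (μ : Measure (ℝ × ℝ))
    (hμ : μ = volume.withDensity (fun p : ℝ × ℝ =>
      ENNReal.ofReal ((Set.Ioo 0 d ×ˢ Set.Ioo (-π) π).indicator
        (fun q : ℝ × ℝ => q.1 / (π * d ^ 2)) p)))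
    (ν : Measure (EuclideanSpace ℝ (Fin 2)))
    (hν : ν = Measure.map
      (fun p : ℝ × ℝ => (WithLp.equiv 2 (Fin 2 → ℝ)).symm
        ![p.1 * Real.cos p.2, p.1 * Real.sin p.2]) μ)
    (i j : ℝ)
    (hsub : {p : EuclideanSpace ℝ (Fin 2) |
        p 0 ∈ Set.Icc (i - 1/2) (i + 1/2) ∧ p 1 ∈ Set.Icc (j - 1/2) (j + 1/2)} ⊆
      {p : EuclideanSpace ℝ (Fin 2) | ‖p‖ < d}) :
    ν {p : EuclideanSpace ℝ (Fin 2) |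
        p 0 ∈ Set.Icc (i - 1/2) (i + 1/2) ∧ p 1 ∈ Set.Icc (j - 1/2) (j + 1/2)} =
      ENNReal.ofReal (1 / (π * d ^ 2)) := by
  have hcell : MeasurableSet {p : EuclideanSpace ℝ (Fin 2) |
      p 0 ∈ Set.Icc (i - 1/2) (i + 1/2) ∧ p 1 ∈ Set.Icc (j - 1/2) (j + 1/2)} := by
    have h (k : Fin 2) : Measurable fun p : EuclideanSpace ℝ (Fin 2) => p k := by fun_prop
    exact (h 0 measurableSet_Icc).inter (h 1 measurableSet_Icc)
  have hmap : Measurable fun p : ℝ × ℝ => (WithLp.equiv 2 (Fin 2 → ℝ)).symm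
      ![p.1 * Real.cos p.2, p.1 * Real.sin p.2] := by
    refine (WithLp.measurable_toLp 2 (Fin 2 → ℝ)).comp (measurable_pi_iff.2 fun k => ?_)
    fin_cases k
    · exact measurable_fst.mul (measurable_cos.comp measurable_snd)
    · exact measurable_fst.mul (measurable_sin.comp measurable_snd)
  have hdisc : ∀ q ∈ Set.Icc (i - 1/2) (i + 1/2) ×ˢ Set.Icc (j - 1/2) (j + 1/2),
      q.1 ^ 2 + q.2 ^ 2 < d ^ 2 := by
    intro q hq
    have h : ‖(!₂[q.1, q.2] : EuclideanSpace ℝ (Fin 2))‖ < d := hsub ⟨hq.1, hq.2⟩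
    rw [EuclideanSpace.norm_eq, Real.sqrt_lt' hd] at h
    simpa [Fin.sum_univ_two] using h
  have hvol : volume (Set.Icc (i - 1/2) (i + 1/2) ×ˢ Set.Icc (j - 1/2) (j + 1/2)) = 1 := by
    rw [Measure.volume_eq_prod, Measure.prod_prod, Real.volume_Icc, Real.volume_Icc]
    ring_nf
    simp
  rw [hν, Measure.map_apply hmap hcell, hμ]
  refine (withDensity_polarCoord_symm_preimage hd
    (measurableSet_Icc.prod measurableSet_Icc) hdisc).trans ?_
  rw [hvol, mul_one]
end

section
/- For every real x > 1/2, 1/(x + 1/2) < arctan((x + 1/2)/(x − 1/2)) − arctan((x − 1/2)/(x + 1/2)) < 1/x. -/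
open Real

theorem arctan_lt_self_of_pos {u : ℝ} (hu : 0 < u) : arctan u < u := by
  simpa only [tan_arctan] using lt_tan (arctan_pos.2 hu) (arctan_lt_pi_div_two u)

theorem div_one_add_lt_arctan {u : ℝ} (hu : 0 < u) : u / (1 + u) < arctan u := by
  have hsqrt : √(1 + u ^ 2) < 1 + u := (sqrt_lt' (by linarith)).2 (by nlinarith)
  calc u / (1 + u) < u / √(1 + u ^ 2) := div_lt_div_of_pos_left hu (by positivity) hsqrt
    _ = sin (arctan u) := (sin_arctan u).symm
    _ < arctan u := sin_lt (arctan_pos.2 hu)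

theorem arctan_sub_arctan_eq_two_mul_arctan {x : ℝ} (hx : 1 / 2 < x) :
    arctan ((x + 1/2) / (x - 1/2)) - arctan ((x - 1/2) / (x + 1/2)) =
      2 * arctan (1 / (2 * x)) := by
  have hx0 : 0 < x := by linarith
  have hu0 : 0 < 1 / (2 * x) := by positivity
  have hu1 : 1 / (2 * x) < 1 := (div_lt_one (by linarith)).2 (by linarith)
  have hadd := arctan_add (x := 1) (y := 1 / (2 * x)) (by linarith)
  have hsub := arctan_add (x := 1) (y := -(1 / (2 * x))) (by linarith)
  have h₁ : (1 + 1 / (2 * x)) / (1 - 1 * (1 / (2 * x))) = (x + 1/2) / (x - 1/2) := by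
    rw [div_eq_div_iff (by linarith) (by linarith)]
    field_simp
  have h₂ : (1 + -(1 / (2 * x))) / (1 - 1 * -(1 / (2 * x))) = (x - 1/2) / (x + 1/2) := by
    rw [div_eq_div_iff (by linarith) (by linarith)]
    field_simp
    ring
  rw [h₁] at hadd
  rw [h₂, arctan_neg] at hsub
  linarith

theorem stmt_9 (x : ℝ) (hx : x > 1/2) :
    1 / (x + 1/2) <
        Real.arctan ((x + 1/2) / (x - 1/2)) - Real.arctan ((x - 1/2) / (x + 1/2)) ∧
      Real.arctan ((x + 1/2) / (x - 1/2)) - Real.arctan ((x - 1/2) / (x + 1/2)) < 1 / x := by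
  have hx0 : 0 < x := by linarith
  have hu : 0 < 1 / (2 * x) := by positivity
  rw [arctan_sub_arctan_eq_two_mul_arctan hx]
  constructor
  · have hlower : 1 / (x + 1/2) = 2 * (1 / (2 * x) / (1 + 1 / (2 * x))) := by
      field_simp
    linarith [div_one_add_lt_arctan hu]
  · have hupper : 1 / x = 2 * (1 / (2 * x)) := by field_simp
    linarith [arctan_lt_self_of_pos hu]
end
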